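/- arXiv:1606.01986 — 2 statements merged into one kernel-verified Lean document; each statement's English description precedes it below -/
import Mathlib

section
/- Let x > 0 and let k be a natural number. If k is odd, then ∫_{−x/2}^{x/2} s^k {x choose x/2 + s} ds = 0. If k is even, then (1/(2(e^x − 1))) ∫_{−x/2}^{x/2} s^k {x choose x/2 + s} ds = (1/(e^x − 1)) [ (x/2)^{(k+1)/2} Γ((k+1)/2) ( I_{(k+1)/2}(x) + I_{(k−1)/2}(x) ) − (x/2)^k ], i.e. these are the moments of the symmetric continuous binomial distribution. -/
/-- The continuous binomial coefficient `{x choose s}`. -/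
noncomputable def cbinom (x s : ℝ) : ℝ :=
  ∑' n : ℕ, (s * (x - s)) ^ n *
    (2 / ((n.factorial : ℝ)) ^ 2 + x / ((n.factorial : ℝ) * ((n + 1).factorial : ℝ)))

/-- The modified Bessel function of the first kind of real order `ν`. -/
noncomputable def besselI (ν : ℝ) (z : ℝ) : ℝ :=
  ∑' n : ℕ, (z / 2) ^ (2 * (n : ℝ) + ν) / ((n.factorial : ℝ) * Real.Gamma ((n : ℝ) + ν + 1))

open intervalIntegral in
lemma aux_J (a : ℝ) (n : ℕ) : ∀ k : ℕ, Even k →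
    ∫ s in (-a)..a, s ^ k * (a ^ 2 - s ^ 2) ^ n =
      a ^ (2 * n + k + 1) * Real.Gamma (((k : ℝ) + 1) / 2) * (n.factorial : ℝ) /
        Real.Gamma ((n : ℝ) + ((k : ℝ) + 1) / 2 + 1) := by
  induction n with
  | zero =>
    intro k hk
    have hm : (0 : ℝ) < ((k : ℝ) + 1) / 2 := by positivity
    have hG := Real.Gamma_pos_of_pos hm
    have h1 : (-a) ^ (k + 1) = - a ^ (k + 1) := (Even.add_one hk).neg_pow a
    simp only [pow_zero, mul_one, integral_pow, h1]
    norm_num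
    rw [Real.Gamma_add_one hm.ne']
    field_simp
    ring
  | succ n ih =>
    intro k hk
    have hm : (0 : ℝ) < ((k : ℝ) + 1) / 2 := by positivity
    have hG := Real.Gamma_pos_of_pos hm
    have key : ∫ s in (-a)..a, ((a ^ 2 - s ^ 2) ^ (n + 1) * s ^ k) =
        (2 * (n + 1) / (k + 1)) * ∫ s in (-a)..a, s ^ (k + 2) * (a ^ 2 - s ^ 2) ^ n := by
      have hu : ∀ s ∈ Set.uIcc (-a) a, HasDerivAt (fun s : ℝ => (a ^ 2 - s ^ 2) ^ (n + 1))
          (((n + 1 : ℕ) : ℝ) * (a ^ 2 - s ^ 2) ^ n * (-(2 * s))) s := by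
        intro s _
        have h := ((hasDerivAt_pow 2 s).const_sub (a ^ 2)).pow (n + 1)
        have e : ((n + 1 : ℕ) : ℝ) * (a ^ 2 - s ^ 2) ^ n * (-(2 * s)) =
            ((n + 1 : ℕ) : ℝ) * (a ^ 2 - s ^ 2) ^ (n + 1 - 1) * (-(((2 : ℕ) : ℝ) * s ^ (2 - 1))) := by
          simp
        rw [e]
        exact h
      have hv : ∀ s ∈ Set.uIcc (-a) a, HasDerivAt (fun s : ℝ => s ^ (k + 1) / ((k : ℝ) + 1))
          (s ^ k) s := by
        intro s _
        have h := (hasDerivAt_pow (k + 1) s).div_const ((k : ℝ) + 1)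
        have hk0 : (k : ℝ) + 1 ≠ 0 := by positivity
        have e : s ^ k = ((k + 1 : ℕ) : ℝ) * s ^ (k + 1 - 1) / ((k : ℝ) + 1) := by
          rw [eq_div_iff hk0]
          simp [mul_comm]
        rw [e]
        exact h
      rw [integral_mul_deriv_eq_deriv_mul hu hv
        (Continuous.intervalIntegrable (by fun_prop) _ _)
        (Continuous.intervalIntegrable (by fun_prop) _ _)]
      have e1 : (a ^ 2 - (-a) ^ 2) ^ (n + 1) = 0 := by simp
      have e2 : (a ^ 2 - a ^ 2) ^ (n + 1) = 0 := by simp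
      rw [e1, e2, zero_mul, zero_mul, sub_zero, zero_sub, ← integral_neg, ← integral_const_mul]
      congr 1
      ext s
      push_cast
      field_simp
      ring
    have hc : (∫ s in (-a)..a, s ^ k * (a ^ 2 - s ^ 2) ^ (n + 1)) =
        ∫ s in (-a)..a, ((a ^ 2 - s ^ 2) ^ (n + 1) * s ^ k) := by
      congr 1; ext s; ring
    rw [hc, key, ih (k + 2) (by simpa [Nat.even_add] using hk)]
    have g1 : (((k + 2 : ℕ) : ℝ) + 1) / 2 = ((k : ℝ) + 1) / 2 + 1 := by push_cast; ring
    have g2 : (n : ℝ) + (((k : ℝ) + 1) / 2 + 1) + 1 =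
      ((n + 1 : ℕ) : ℝ) + ((k : ℝ) + 1) / 2 + 1 := by push_cast; ring
    rw [g1, g2, Real.Gamma_add_one hm.ne', Nat.factorial_succ]
    have : Real.Gamma (((n + 1 : ℕ) : ℝ) + ((k : ℝ) + 1) / 2 + 1) > 0 :=
      Real.Gamma_pos_of_pos (by positivity)
    have p : 2 * n + (k + 2) + 1 = 2 * (n + 1) + k + 1 := by ring
    rw [p]
    push_cast at this ⊢
    field_simp

lemma aux_summable (a : ℝ) (c : ℕ → ℝ) (hc0 : ∀ n, 0 ≤ c n)
    (hc : ∀ n, c n ≤ 1 / (n.factorial : ℝ)) : Summable fun n => (a ^ 2) ^ n * c n := by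
  refine Summable.of_nonneg_of_le (fun n => mul_nonneg (by positivity) (hc0 n)) (fun n => ?_)
    (Real.summable_pow_div_factorial (a ^ 2))
  calc (a ^ 2) ^ n * c n ≤ (a ^ 2) ^ n * (1 / (n.factorial : ℝ)) :=
        mul_le_mul_of_nonneg_left (hc n) (by positivity)
    _ = _ := by ring

lemma aux_bound (a s : ℝ) (ha : 0 < a) (hs : s ∈ Set.Icc (-a) a) (n : ℕ) (c : ℝ) (hc : 0 ≤ c) :
    ‖(a ^ 2 - s ^ 2) ^ n * c‖ ≤ (a ^ 2) ^ n * c := by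
  have h : 0 ≤ a ^ 2 - s ^ 2 := by nlinarith [hs.1, hs.2]
  rw [Real.norm_of_nonneg (by positivity)]
  have : a ^ 2 - s ^ 2 ≤ a ^ 2 := by nlinarith
  gcongr

lemma aux_hasSum_int (a : ℝ) (ha : 0 < a) (k : ℕ) (hk : Even k) (c : ℕ → ℝ) (hc0 : ∀ n, 0 ≤ c n)
    (hc : ∀ n, c n ≤ 1 / (n.factorial : ℝ)) :
    HasSum (fun n : ℕ => (a ^ (2 * n + k + 1) * Real.Gamma (((k : ℝ) + 1) / 2) * (n.factorial : ℝ) /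
        Real.Gamma ((n : ℝ) + ((k : ℝ) + 1) / 2 + 1)) * c n)
      (∫ s in (-a)..a, s ^ k * ∑' n, (a ^ 2 - s ^ 2) ^ n * c n) := by
  have hsum := aux_summable a c hc0 hc
  have huI : ∀ s ∈ Set.uIoc (-a) a, s ∈ Set.Icc (-a) a := by
    intro s hs
    rw [Set.uIoc_of_le (by linarith)] at hs
    exact ⟨hs.1.le, hs.2⟩
  have H := intervalIntegral.hasSum_integral_of_dominated_convergence (μ := MeasureTheory.volume)
    (a := -a) (b := a)
    (F := fun n s => s ^ k * ((a ^ 2 - s ^ 2) ^ n * c n))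
    (f := fun s => s ^ k * ∑' n, (a ^ 2 - s ^ 2) ^ n * c n)
    (fun n _ => a ^ k * ((a ^ 2) ^ n * c n))
    (fun n => (Continuous.aestronglyMeasurable (by fun_prop)))
    (fun n => Filter.Eventually.of_forall fun s hs => by
      rw [norm_mul]
      refine mul_le_mul ?_ (aux_bound a s ha (huI s hs) n _ (hc0 n)) (norm_nonneg _) (by positivity)
      rw [norm_pow]
      exact pow_le_pow_left₀ (norm_nonneg _) (abs_le.2 (huI s hs)) k)
    (Filter.Eventually.of_forall fun s _ => hsum.mul_left _)
    (by simp)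
    (Filter.Eventually.of_forall fun s hs =>
      ((Summable.of_norm_bounded hsum
        (fun n => aux_bound a s ha (huI s hs) n _ (hc0 n))).hasSum.mul_left _))
  refine H.congr_fun ?_ |> id
  intro n
  rw [← aux_J a n k hk, ← intervalIntegral.integral_mul_const]
  congr 1
  ext s
  ring

lemma aux_c1 (n : ℕ) : 1 / (n.factorial : ℝ) ^ 2 ≤ 1 / (n.factorial : ℝ) := by
  have : (1 : ℝ) ≤ n.factorial := by exact_mod_cast n.factorial_pos
  apply one_div_le_one_div_of_le (by positivity)
  nlinarith

lemma aux_c2 (n : ℕ) :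
    1 / ((n.factorial : ℝ) * ((n + 1).factorial : ℝ)) ≤ 1 / (n.factorial : ℝ) := by
  have : (1 : ℝ) ≤ n.factorial := by exact_mod_cast n.factorial_pos
  have : (1 : ℝ) ≤ (n + 1).factorial := by exact_mod_cast (n + 1).factorial_pos
  apply one_div_le_one_div_of_le (by positivity)
  nlinarith

lemma aux_cbinom (x : ℝ) (hx : 0 < x) (s : ℝ) (hs : s ∈ Set.Icc (-(x / 2)) (x / 2)) :
    cbinom x (x / 2 + s) = 2 * (∑' n : ℕ, ((x / 2) ^ 2 - s ^ 2) ^ n * (1 / (n.factorial : ℝ) ^ 2)) +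
      x * ∑' n : ℕ, ((x / 2) ^ 2 - s ^ 2) ^ n *
        (1 / ((n.factorial : ℝ) * ((n + 1).factorial : ℝ))) := by
  have h2 : 0 < x / 2 := by positivity
  have s1 : Summable fun n : ℕ => ((x / 2) ^ 2 - s ^ 2) ^ n * (1 / (n.factorial : ℝ) ^ 2) :=
    Summable.of_norm_bounded (aux_summable (x / 2) _ (fun n => by positivity) aux_c1)
      (fun n => aux_bound _ s h2 hs n _ (by positivity))
  have s2 : Summable fun n : ℕ => ((x / 2) ^ 2 - s ^ 2) ^ n *
      (1 / ((n.factorial : ℝ) * ((n + 1).factorial : ℝ))) :=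
    Summable.of_norm_bounded (aux_summable (x / 2) _ (fun n => by positivity) aux_c2)
      (fun n => aux_bound _ s h2 hs n _ (by positivity))
  rw [← ((s1.hasSum.mul_left 2).add (s2.hasSum.mul_left x)).tsum_eq, cbinom]
  congr 1
  ext n
  have : (x / 2 + s) * (x - (x / 2 + s)) = (x / 2) ^ 2 - s ^ 2 := by ring
  rw [this]
  ring

lemma aux_intble (a : ℝ) (ha : 0 < a) (k : ℕ) (c : ℕ → ℝ) (hc0 : ∀ n, 0 ≤ c n)
    (hc : ∀ n, c n ≤ 1 / (n.factorial : ℝ)) :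
    IntervalIntegrable (fun s : ℝ => s ^ k * ∑' n, (a ^ 2 - s ^ 2) ^ n * c n)
      MeasureTheory.volume (-a) a := by
  apply ContinuousOn.intervalIntegrable
  rw [Set.uIcc_of_le (by linarith)]
  apply ContinuousOn.mul (by fun_prop)
  exact continuousOn_tsum (fun n => by fun_prop) (aux_summable a c hc0 hc)
    (fun n s hs => aux_bound a s ha hs n _ (hc0 n))

theorem symmetric_cbinom_moments (x : ℝ) (hx : 0 < x) (k : ℕ) :
    (Odd k → (∫ s in (-(x / 2))..(x / 2), s ^ k * cbinom x (x / 2 + s)) = 0) ∧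
      (Even k →
        (1 / (2 * (Real.exp x - 1))) *
            ∫ s in (-(x / 2))..(x / 2), s ^ k * cbinom x (x / 2 + s) =
          (1 / (Real.exp x - 1)) *
            ((x / 2) ^ (((k : ℝ) + 1) / 2) * Real.Gamma (((k : ℝ) + 1) / 2) *
                (besselI (((k : ℝ) + 1) / 2) x + besselI (((k : ℝ) - 1) / 2) x) -
              (x / 2) ^ k)) := by
  constructor
  · intro hk
    have h := intervalIntegral.integral_comp_neg (a := -(x / 2)) (b := x / 2)
      (fun s => s ^ k * cbinom x (x / 2 + s))
    have h3 : (fun s : ℝ => (-s) ^ k * cbinom x (x / 2 + -s)) =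
        fun s => -(s ^ k * cbinom x (x / 2 + s)) := by
      ext s
      have : cbinom x (x / 2 + -s) = cbinom x (x / 2 + s) := by
        unfold cbinom
        have e : (x / 2 + -s) * (x - (x / 2 + -s)) = (x / 2 + s) * (x - (x / 2 + s)) := by ring
        rw [e]
      rw [this, hk.neg_pow]; ring
    rw [h3, intervalIntegral.integral_neg, neg_neg] at h
    linarith
  · intro hk
    have ha : 0 < x / 2 := by positivity
    have hm : (0 : ℝ) < ((k : ℝ) + 1) / 2 := by positivity
    have hG := Real.Gamma_pos_of_pos hm
    have H1 := aux_hasSum_int (x / 2) ha k hk (fun n => 1 / (n.factorial : ℝ) ^ 2)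
      (fun n => by positivity) aux_c1
    have H2 := aux_hasSum_int (x / 2) ha k hk
      (fun n => 1 / ((n.factorial : ℝ) * ((n + 1).factorial : ℝ)))
      (fun n => by positivity) aux_c2
    have I1 := aux_intble (x / 2) ha k (fun n => 1 / (n.factorial : ℝ) ^ 2)
      (fun n => by positivity) aux_c1
    have I2 := aux_intble (x / 2) ha k
      (fun n => 1 / ((n.factorial : ℝ) * ((n + 1).factorial : ℝ)))
      (fun n => by positivity) aux_c2
    have hint : (∫ s in (-(x / 2))..(x / 2), s ^ k * cbinom x (x / 2 + s)) =
        2 * (∫ s in (-(x / 2))..(x / 2), s ^ k *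
          ∑' n : ℕ, ((x / 2) ^ 2 - s ^ 2) ^ n * (1 / (n.factorial : ℝ) ^ 2)) +
        x * ∫ s in (-(x / 2))..(x / 2), s ^ k * ∑' n : ℕ, ((x / 2) ^ 2 - s ^ 2) ^ n *
          (1 / ((n.factorial : ℝ) * ((n + 1).factorial : ℝ))) := by
      rw [← intervalIntegral.integral_const_mul, ← intervalIntegral.integral_const_mul,
        ← intervalIntegral.integral_add (I1.const_mul 2) (I2.const_mul x)]
      apply intervalIntegral.integral_congr
      intro s hs
      rw [Set.uIcc_of_le (by linarith)] at hs
      simp only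
      rw [aux_cbinom x hx s hs]
      ring
    set A := ∫ s in (-(x / 2))..(x / 2), s ^ k *
          ∑' n : ℕ, ((x / 2) ^ 2 - s ^ 2) ^ n * (1 / (n.factorial : ℝ) ^ 2)
    set B := ∫ s in (-(x / 2))..(x / 2), s ^ k * ∑' n : ℕ, ((x / 2) ^ 2 - s ^ 2) ^ n *
          (1 / ((n.factorial : ℝ) * ((n + 1).factorial : ℝ)))
    have b1 : (x / 2) ^ (((k : ℝ) + 1) / 2) * Real.Gamma (((k : ℝ) + 1) / 2) *
        besselI (((k : ℝ) + 1) / 2) x = A := by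
      rw [besselI, ← tsum_mul_left, ← H1.tsum_eq]
      congr 1
      ext n
      have e : (x / 2) ^ (2 * n + k + 1) =
          (x / 2) ^ (((k : ℝ) + 1) / 2) * (x / 2) ^ (2 * (n : ℝ) + ((k : ℝ) + 1) / 2) := by
        rw [← Real.rpow_add ha, ← Real.rpow_natCast]
        congr 1
        push_cast; ring
      rw [e]
      field_simp
    have b2 : (x / 2) ^ (((k : ℝ) + 1) / 2) * Real.Gamma (((k : ℝ) + 1) / 2) *
        besselI (((k : ℝ) - 1) / 2) x = (x / 2) ^ k + (x / 2) * B := by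
      rw [besselI, ← tsum_mul_left]
      apply HasSum.tsum_eq
      rw [← hasSum_nat_add_iff' 1]
      have hz : (x / 2) ^ (((k : ℝ) + 1) / 2) * (x / 2) ^ (((k : ℝ) - 1) / 2) = (x / 2) ^ k := by
        rw [← Real.rpow_add ha, ← Real.rpow_natCast]
        congr 1
        ring
      have hg : ((k : ℝ) - 1) / 2 + 1 = ((k : ℝ) + 1) / 2 := by ring
      have h0 : (x / 2) ^ (((k : ℝ) + 1) / 2) * Real.Gamma (((k : ℝ) + 1) / 2) *
          ((x / 2) ^ (2 * ((0 : ℕ) : ℝ) + ((k : ℝ) - 1) / 2) / (((Nat.factorial 0 : ℕ) : ℝ) *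
            Real.Gamma (((0 : ℕ) : ℝ) + ((k : ℝ) - 1) / 2 + 1))) = (x / 2) ^ k := by
        rw [← hz]
        simp only [Nat.cast_zero, mul_zero, zero_add, Nat.factorial_zero, Nat.cast_one, one_mul, hg]
        field_simp
      rw [Finset.sum_range_one, h0, add_sub_cancel_left]
      refine (H2.mul_left (x / 2)).congr_fun ?_
      intro n
      beta_reduce
      have e : (x / 2) * (x / 2) ^ (2 * n + k + 1) =
          (x / 2) ^ (((k : ℝ) + 1) / 2) *
            (x / 2) ^ (2 * ((n + 1 : ℕ) : ℝ) + ((k : ℝ) - 1) / 2) := by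
        rw [← Real.rpow_add ha, ← pow_succ', ← Real.rpow_natCast]
        congr 1
        push_cast; ring
      have g : ((n + 1 : ℕ) : ℝ) + ((k : ℝ) - 1) / 2 + 1 = (n : ℝ) + ((k : ℝ) + 1) / 2 + 1 := by
        push_cast; ring
      rw [g, mul_div_assoc', mul_comm ((x / 2) ^ (((k : ℝ) + 1) / 2)), mul_assoc _ _ ((x / 2) ^ _),
        ← e]
      have : (n.factorial : ℝ) ≠ 0 := by positivity
      field_simp
    rw [mul_add, b1, b2, hint]
    have hE : Real.exp x - 1 ≠ 0 := by
      have := Real.add_one_lt_exp hx.ne'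
      linarith
    field_simp
    ring
end

section
/- Let c > 0 and λ > 0, and define for real s and t the function p(s,t) = (e^{−λt}/(2c)) [ λ Σ_{n=0}^∞ ((λ/(2c))² (c²t² − s²))ⁿ / (n!)² + (λ² t / 2) Σ_{n=0}^∞ (λ/(2c))^{2n} (c²t² − s²)ⁿ / (n! (n+1)!) ]. Then at every point (s,t) with t > 0 and |s| < c t, the function p satisfies the telegraph equation c² ∂²p/∂s² = ∂²p/∂t² + 2λ ∂p/∂t. -/
/-- The absolutely continuous part of the distribution of the Goldstein–Kac telegraph
process with speed `c` and switching rate `lam`. -/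
noncomputable def telegraphDensity (c lam : ℝ) (s t : ℝ) : ℝ :=
  (Real.exp (-(lam * t)) / (2 * c)) *
    (lam * ∑' n : ℕ, ((lam / (2 * c)) ^ 2 * (c ^ 2 * t ^ 2 - s ^ 2)) ^ n /
        ((n.factorial : ℝ)) ^ 2 +
      (lam ^ 2 * t / 2) * ∑' n : ℕ, (lam / (2 * c)) ^ (2 * n) * (c ^ 2 * t ^ 2 - s ^ 2) ^ n /
        ((n.factorial : ℝ) * ((n + 1).factorial : ℝ)))

noncomputable def telF (k : ℕ) (x : ℝ) : ℝ :=
  ∑' n : ℕ, x ^ n / ((n.factorial : ℝ) * ((n + k).factorial : ℝ))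

lemma telF_bound (k n : ℕ) (x R : ℝ) (h : |x| ≤ R) :
    ‖x ^ n / ((n.factorial : ℝ) * ((n + k).factorial : ℝ))‖ ≤ R ^ n / (n.factorial : ℝ) := by
  have h1 : (1 : ℝ) ≤ ((n + k).factorial : ℝ) := by
    exact_mod_cast Nat.succ_le_of_lt (Nat.factorial_pos _)
  have h0 : (0 : ℝ) < (n.factorial : ℝ) := by exact_mod_cast Nat.factorial_pos _
  have hR : 0 ≤ R := (abs_nonneg x).trans h
  rw [Real.norm_eq_abs, abs_div, abs_pow, abs_of_pos (mul_pos h0 (by linarith))]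
  apply div_le_div₀ (by positivity) (pow_le_pow_left₀ (abs_nonneg x) h n) h0
  nlinarith

lemma telF_summable (k : ℕ) (x : ℝ) :
    Summable (fun n : ℕ => x ^ n / ((n.factorial : ℝ) * ((n + k).factorial : ℝ))) :=
  Summable.of_norm_bounded (Real.summable_pow_div_factorial |x|)
    (fun n => telF_bound k n x |x| le_rfl)

lemma telF_shift (k n : ℕ) (x : ℝ) :
    ((n + 1 : ℕ) : ℝ) * x ^ (n + 1 - 1) / (((n + 1).factorial : ℝ) * ((n + 1 + k).factorial : ℝ))
      = x ^ n / ((n.factorial : ℝ) * ((n + (k + 1)).factorial : ℝ)) := by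
  have e : n + 1 + k = n + (k + 1) := by ring
  have h0 : (n.factorial : ℝ) ≠ 0 := by exact_mod_cast Nat.factorial_ne_zero _
  have h2 : ((n + (k + 1)).factorial : ℝ) ≠ 0 := by exact_mod_cast Nat.factorial_ne_zero _
  rw [e, Nat.factorial_succ n, Nat.add_sub_cancel]
  push_cast
  have h3 : (n : ℝ) + 1 ≠ 0 := by positivity
  field_simp

lemma telF_hasDerivAt (k : ℕ) (x : ℝ) : HasDerivAt (telF k) (telF (k + 1) x) x := by
  set R : ℝ := |x| + 1 with hR
  set g' : ℕ → ℝ → ℝ := fun n y =>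
    (n : ℝ) * y ^ (n - 1) / ((n.factorial : ℝ) * ((n + k).factorial : ℝ)) with hg'
  set u : ℕ → ℝ := fun n => Nat.casesOn n 0 (fun m => R ^ m / (m.factorial : ℝ)) with hu
  have hsu : Summable u := by
    rw [← summable_nat_add_iff 1]
    exact Real.summable_pow_div_factorial R
  have key : HasDerivAt (telF k) (∑' n, g' n x) x := by
    refine hasDerivAt_tsum_of_isPreconnected (t := Metric.ball (0 : ℝ) R) (y₀ := 0) (u := u)
      hsu Metric.isOpen_ball (convex_ball _ _).isPreconnected ?_ ?_ ?_ (telF_summable k 0) ?_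
    · intro n y _
      exact (hasDerivAt_pow n y).div_const _
    · intro n y hy
      have hy' : |y| ≤ R := by
        have := Metric.mem_ball.1 hy
        rw [Real.dist_eq, sub_zero] at this
        exact this.le
      cases n with
      | zero => simp [hg', hu]
      | succ m =>
        simp only [hg', hu]
        rw [telF_shift]
        exact telF_bound (k + 1) m y R hy'
    · simp only [Metric.mem_ball, dist_self]; positivity
    · rw [Metric.mem_ball, Real.dist_eq, sub_zero]; linarith
  convert key using 1
  have hs : Summable (fun n => g' n x) := by
    rw [← summable_nat_add_iff 1]
    refine (telF_summable (k + 1) x).congr ?_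
    intro n
    exact (telF_shift k n x).symm
  rw [hs.tsum_eq_zero_add]
  have h0 : g' 0 x = 0 := by simp [hg']
  rw [h0, zero_add]
  exact tsum_congr fun n => (telF_shift k n x).symm

lemma telF_rec (k : ℕ) (x : ℝ) :
    telF k x = (k + 1) * telF (k + 1) x + x * telF (k + 2) x := by
  have h1 := (telF_summable k x)
  have h2 := (telF_summable (k + 1) x)
  unfold telF
  rw [h1.tsum_eq_zero_add, h2.tsum_eq_zero_add, mul_add, ← tsum_mul_left, ← tsum_mul_left, add_assoc,
    ← Summable.tsum_add]
  · congr 1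
    · have h : (k.factorial : ℝ) ≠ 0 := by exact_mod_cast Nat.factorial_ne_zero _
      have h3 : (k : ℝ) + 1 ≠ 0 := by positivity
      simp [Nat.factorial_succ]
      field_simp
    · refine tsum_congr fun n => ?_
      have e1 : n + 1 + k = n + k + 1 := by ring
      have e2 : n + 1 + (k + 1) = n + k + 1 + 1 := by ring
      have e3 : n + (k + 2) = n + k + 1 + 1 := by ring
      have h0 : (n.factorial : ℝ) ≠ 0 := by exact_mod_cast Nat.factorial_ne_zero _
      have h2 : ((n + k + 1).factorial : ℝ) ≠ 0 := by exact_mod_cast Nat.factorial_ne_zero _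
      rw [e1, e2, e3, Nat.factorial_succ (n + k + 1), Nat.factorial_succ n]
      push_cast
      have h3 : (n : ℝ) + 1 ≠ 0 := by positivity
      have h4 : (n : ℝ) + k + 1 + 1 ≠ 0 := by positivity
      field_simp
      ring
  · exact ((summable_nat_add_iff 1).2 h2).mul_left _
  · exact (telF_summable (k + 2) x).mul_left _

lemma telegraphDensity_eq (c lam s t : ℝ) : telegraphDensity c lam s t =
    (Real.exp (-(lam * t)) / (2 * c)) *
    (lam * telF 0 ((lam / (2 * c)) ^ 2 * (c ^ 2 * t ^ 2 - s ^ 2)) +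
      (lam ^ 2 * t / 2) * telF 1 ((lam / (2 * c)) ^ 2 * (c ^ 2 * t ^ 2 - s ^ 2))) := by
  unfold telegraphDensity telF
  simp only [mul_pow, pow_mul, add_zero, sq (Nat.factorial _ : ℝ)]

lemma telF_ds (a c t s : ℝ) (k : ℕ) :
    HasDerivAt (fun s => telF k (a ^ 2 * (c ^ 2 * t ^ 2 - s ^ 2)))
      (telF (k + 1) (a ^ 2 * (c ^ 2 * t ^ 2 - s ^ 2)) * (-2 * a ^ 2 * s)) s := by
  have h : HasDerivAt (fun s : ℝ => a ^ 2 * (c ^ 2 * t ^ 2 - s ^ 2)) (-2 * a ^ 2 * s) s := by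
    have h := ((hasDerivAt_pow 2 s).const_sub (c ^ 2 * t ^ 2)).const_mul (a ^ 2)
    refine h.congr_deriv ?_
    push_cast; ring
  exact (telF_hasDerivAt k _).comp s h

lemma telF_dt (a c t s : ℝ) (k : ℕ) :
    HasDerivAt (fun t => telF k (a ^ 2 * (c ^ 2 * t ^ 2 - s ^ 2)))
      (telF (k + 1) (a ^ 2 * (c ^ 2 * t ^ 2 - s ^ 2)) * (2 * a ^ 2 * c ^ 2 * t)) t := by
  have h : HasDerivAt (fun t : ℝ => a ^ 2 * (c ^ 2 * t ^ 2 - s ^ 2)) (2 * a ^ 2 * c ^ 2 * t) t := by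
    refine ((((hasDerivAt_pow 2 t).const_mul (c ^ 2)).sub_const (s ^ 2)).const_mul (a ^ 2)).congr_deriv ?_
    push_cast; ring
  exact (telF_hasDerivAt k _).comp t h

lemma tel_exp (lam t : ℝ) :
    HasDerivAt (fun t => Real.exp (-(lam * t))) (Real.exp (-(lam * t)) * (-lam)) t := by
  have h : HasDerivAt (fun t : ℝ => -(lam * t)) (-lam) t := by
    exact ((hasDerivAt_id t).const_mul lam).neg.congr_deriv (by ring)
  exact h.exp

theorem telegraph_equation (c lam : ℝ) (hc : 0 < c) (hlam : 0 < lam) (s t : ℝ)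
    (ht : 0 < t) (hst : |s| < c * t) :
    c ^ 2 * deriv (fun s' => deriv (fun s'' => telegraphDensity c lam s'' t) s') s =
      deriv (fun t' => deriv (fun t'' => telegraphDensity c lam s t'') t') t +
        2 * lam * deriv (fun t' => telegraphDensity c lam s t') t := by
  simp only [telegraphDensity_eq]
  obtain ⟨a, ha⟩ : ∃ a, a = lam / (2 * c) := ⟨_, rfl⟩
  rw [← ha]
  have hl : lam = 2 * a * c := by rw [ha]; field_simp
  have ds1 : ∀ s, HasDerivAt (fun s => (Real.exp (-(lam * t)) / (2 * c)) *
      (lam * telF 0 (a ^ 2 * (c ^ 2 * t ^ 2 - s ^ 2)) +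
      (lam ^ 2 * t / 2) * telF 1 (a ^ 2 * (c ^ 2 * t ^ 2 - s ^ 2)))) _ s := fun s =>
    (((telF_ds a c t s 0).const_mul lam).add
      ((telF_ds a c t s 1).const_mul (lam ^ 2 * t / 2))).const_mul _
  have hlin : ∀ (b s : ℝ), HasDerivAt (fun s : ℝ => b * s) b s := fun b s => by
    simpa using (hasDerivAt_id s).const_mul b
  have ds2 := ((((telF_ds a c t s 1).mul (hlin (-2 * a ^ 2) s)).const_mul lam).add
      (((telF_ds a c t s 2).mul (hlin (-2 * a ^ 2) s)).const_mul (lam ^ 2 * t / 2))).const_mul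
      (Real.exp (-(lam * t)) / (2 * c))
  have hq : ∀ t : ℝ, HasDerivAt (fun t : ℝ => lam ^ 2 * t / 2) (lam ^ 2 / 2) t := fun t =>
    (hlin (lam ^ 2) t).div_const 2
  have dt1 : ∀ t, HasDerivAt (fun t => (Real.exp (-(lam * t)) / (2 * c)) *
      (lam * telF 0 (a ^ 2 * (c ^ 2 * t ^ 2 - s ^ 2)) +
      (lam ^ 2 * t / 2) * telF 1 (a ^ 2 * (c ^ 2 * t ^ 2 - s ^ 2)))) _ t := fun t =>
    ((tel_exp lam t).div_const (2 * c)).mul (((telF_dt a c t s 0).const_mul lam).add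
      ((hq t).mul (telF_dt a c t s 1)))
  have dt2 := ((((tel_exp lam t).mul_const (-lam)).div_const (2 * c)).mul
      (((telF_dt a c t s 0).const_mul lam).add ((hq t).mul (telF_dt a c t s 1)))).add
    (((tel_exp lam t).div_const (2 * c)).mul
      ((((telF_dt a c t s 1).mul (hlin (2 * a ^ 2 * c ^ 2) t)).const_mul lam).add
       (((telF_dt a c t s 1).const_mul (lam ^ 2 / 2)).add
        ((hq t).mul ((telF_dt a c t s 2).mul (hlin (2 * a ^ 2 * c ^ 2) t))))))
  have es : deriv (fun s => (Real.exp (-(lam * t)) / (2 * c)) *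
      (lam * telF 0 (a ^ 2 * (c ^ 2 * t ^ 2 - s ^ 2)) +
      (lam ^ 2 * t / 2) * telF 1 (a ^ 2 * (c ^ 2 * t ^ 2 - s ^ 2)))) = _ :=
    funext fun s => (ds1 s).deriv
  have et : deriv (fun t => (Real.exp (-(lam * t)) / (2 * c)) *
      (lam * telF 0 (a ^ 2 * (c ^ 2 * t ^ 2 - s ^ 2)) +
      (lam ^ 2 * t / 2) * telF 1 (a ^ 2 * (c ^ 2 * t ^ 2 - s ^ 2)))) = _ :=
    funext fun t => (dt1 t).deriv
  have Es := ds2.deriv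
  have Et := dt2.deriv
  rw [es, et]
  refine (congrArg (c ^ 2 * ·) Es).trans ?_
  refine Eq.trans ?_ (congrArg (· + _) Et.symm)
  have r0 := telF_rec 0 (a ^ 2 * (c ^ 2 * t ^ 2 - s ^ 2))
  have r1 := telF_rec 1 (a ^ 2 * (c ^ 2 * t ^ 2 - s ^ 2))
  clear Es Et es et ds1 ds2 dt1 dt2 hq hlin
  simp only [Pi.add_apply, Pi.mul_apply, Nat.reduceAdd, Nat.cast_zero, Nat.cast_one, zero_add] at r0 r1 ⊢
  generalize Real.exp (-(lam * t)) = E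
  rw [r0, r1]
  generalize telF 2 (a ^ 2 * (c ^ 2 * t ^ 2 - s ^ 2)) = F2
  generalize telF 3 (a ^ 2 * (c ^ 2 * t ^ 2 - s ^ 2)) = F3
  subst hl
  field_simp
  ring
end
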